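/- Let 0 < p < 1 and let Φ : M_m(ℂ) → M_n(ℂ) be a unital Schwarz map. Then for any positive definite A ∈ M_n(ℂ) and any invertible B ∈ M_m(ℂ): tr[(B* A^{-p} B)^{1/(2-p)}] ≥ tr[(Φ†(B)* Φ†(A)^{-p} Φ†(B))^{1/(2-p)}]. -/

import Mathlib

open Matrix
open scoped ComplexOrder

/-- Real power of a matrix, defined spectrally for Hermitian matrices (junk value `0` otherwise). -/
noncomputable def mpow {k : ℕ} (A : Matrix (Fin k) (Fin k) ℂ) (p : ℝ) : Matrix (Fin k) (Fin k) ℂ :=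
  if hA : A.IsHermitian then
    (hA.eigenvectorUnitary : Matrix (Fin k) (Fin k) ℂ) *
      Matrix.diagonal (fun i => ((hA.eigenvalues i ^ p : ℝ) : ℂ)) *
      (hA.eigenvectorUnitary : Matrix (Fin k) (Fin k) ℂ)ᴴ
  else 0

/-- A Schwarz map: `Φ(K*K) ≥ Φ(K)*Φ(K)` for all `K`. -/
def IsSchwarz {a b : ℕ} (Φ : Matrix (Fin a) (Fin a) ℂ →ₗ[ℂ] Matrix (Fin b) (Fin b) ℂ) : Prop :=
  ∀ K, (Φ (Kᴴ * K) - (Φ K)ᴴ * Φ K).PosSemidef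

/-- A positive map: sends positive semidefinite matrices to positive semidefinite matrices. -/
def IsPositiveMap {a b : ℕ} (Φ : Matrix (Fin a) (Fin a) ℂ →ₗ[ℂ] Matrix (Fin b) (Fin b) ℂ) : Prop :=
  ∀ X, X.PosSemidef → (Φ X).PosSemidef

/-- `Ψ` is the Hilbert–Schmidt adjoint of `Φ`: `⟨X, Φ Y⟩ = ⟨Ψ X, Y⟩`. -/
def IsHSAdjoint {a b : ℕ} (Φ : Matrix (Fin a) (Fin a) ℂ →ₗ[ℂ] Matrix (Fin b) (Fin b) ℂ)
    (Ψ : Matrix (Fin b) (Fin b) ℂ →ₗ[ℂ] Matrix (Fin a) (Fin a) ℂ) : Prop :=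
  ∀ X Y, (Xᴴ * Φ Y).trace = ((Ψ X)ᴴ * Y).trace

/-!
Let `q = 1 / (2 - p)`. Scalar Young inequalities in joint spectral coordinates show that
`tr Y ^ q` is the infimum of `q tr (Y Z ^ (p - 1)) + (1 - q) tr Z` over positive definite `Z`,
attained in the limit at `Z = Y ^ q + ε`. It therefore suffices to compare
`tr (B* A ^ (-p) B Z ^ (p - 1))` with the same expression in `Ψ B`, `Ψ A` and `Ψ Z + ε`, where `Ψ`
is the adjoint of `Φ`; the trace of `Z` does not increase under `Ψ`.

By quadratic duality, the form `B ↦ tr (B* A ^ (-p) B Z ^ (p - 1))` is dual to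
`X ↦ tr (X* A ^ p X Z ^ (1 - p))`, so the comparison follows from
`tr (Φ(X)* A ^ p Φ(X) Z ^ (1 - p)) ≤ tr (X* Ψ(A) ^ p X Ψ(Z) ^ (1 - p))`. For `p = 0` and `p = 1`
this is the Schwarz inequality paired with `Z` and `A`. In spectral coordinates both sides are
weighted `ℓ²` norms, and the endpoint bounds interpolate.
-/

section WeightedInterpolation

open MeasureTheory Set

variable {ι κ E F : Type*} [Fintype ι] [Fintype κ] [SeminormedAddCommGroup E]
  [NormedSpace ℝ E] [SeminormedAddCommGroup F]

/-- The parallel sum of two nonnegative weights, i.e. half their harmonic mean; it is `0` when both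
weights vanish, because then the quotient is `0 / 0 = 0`. -/
noncomputable def parallelSum (α β : ℝ) : ℝ := α * β / (α + β)

lemma parallelSum_mul_norm_add_sq_le {α β : ℝ} (hα : 0 ≤ α) (hβ : 0 ≤ β) (u v : F) :
    parallelSum α β * ‖u + v‖ ^ 2 ≤ α * ‖u‖ ^ 2 + β * ‖v‖ ^ 2 := by
  rcases (add_nonneg hα hβ).eq_or_lt with h | h
  · simp only [parallelSum, ← h, div_zero, zero_mul]
    positivity
  · calc parallelSum α β * ‖u + v‖ ^ 2
        ≤ parallelSum α β * (‖u‖ + ‖v‖) ^ 2 := by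
          unfold parallelSum
          gcongr
          exact norm_add_le u v
      _ ≤ α * ‖u‖ ^ 2 + β * ‖v‖ ^ 2 := by
          rw [parallelSum, div_mul_eq_mul_div, div_le_iff₀ h]
          linarith [sq_nonneg (α * ‖u‖ - β * ‖v‖)]

lemma exists_add_eq_and_parallelSum_mul_norm_sq_eq {α β : ℝ} (hα : 0 ≤ α) (hβ : 0 ≤ β) (x : E) :
    ∃ u v : E, u + v = x ∧ parallelSum α β * ‖x‖ ^ 2 = α * ‖u‖ ^ 2 + β * ‖v‖ ^ 2 := by
  rcases (add_nonneg hα hβ).eq_or_lt with h | h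
  · obtain ⟨rfl, rfl⟩ := (add_eq_zero_iff_of_nonneg hα hβ).1 h.symm
    exact ⟨0, x, zero_add x, by simp [parallelSum]⟩
  · refine ⟨(β / (α + β)) • x, (α / (α + β)) • x, ?_, ?_⟩
    · rw [← add_smul, ← add_div, add_comm β, div_self h.ne', one_smul]
    · simp only [parallelSum, norm_smul, mul_pow, Real.norm_eq_abs, sq_abs]
      field_simp
      ring

lemma sum_parallelSum_mul_norm_map_sq_le {a b : ι → ℝ} {a' b' : κ → ℝ} (ha : 0 ≤ a) (hb : 0 ≤ b)
    (ha' : 0 ≤ a') (hb' : 0 ≤ b') (T : (κ → E) →+ (ι → F))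
    (hTa : ∀ x, ∑ i, a i * ‖T x i‖ ^ 2 ≤ ∑ k, a' k * ‖x k‖ ^ 2)
    (hTb : ∀ x, ∑ i, b i * ‖T x i‖ ^ 2 ≤ ∑ k, b' k * ‖x k‖ ^ 2) (x : κ → E) :
    ∑ i, parallelSum (a i) (b i) * ‖T x i‖ ^ 2 ≤
      ∑ k, parallelSum (a' k) (b' k) * ‖x k‖ ^ 2 := by
  choose u v huv hx using fun k ↦
    exists_add_eq_and_parallelSum_mul_norm_sq_eq (ha' k) (hb' k) (x k)
  have hTx : T x = T u + T v := by rw [← map_add, ← funext huv]; rfl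
  calc ∑ i, parallelSum (a i) (b i) * ‖T x i‖ ^ 2
      ≤ ∑ i, (a i * ‖T u i‖ ^ 2 + b i * ‖T v i‖ ^ 2) := by
        rw [hTx]
        exact Finset.sum_le_sum fun i _ ↦ parallelSum_mul_norm_add_sq_le (ha i) (hb i) _ _
    _ ≤ ∑ k, (a' k * ‖u k‖ ^ 2 + b' k * ‖v k‖ ^ 2) := by
        simpa only [Finset.sum_add_distrib] using add_le_add (hTa u) (hTb v)
    _ = ∑ k, parallelSum (a' k) (b' k) * ‖x k‖ ^ 2 := by simp only [hx]

lemma mul_rpowIntegrand₀₁_div_eq_parallelSum {p α β t : ℝ} (hp : p ∈ Ioo 0 1) (hα : 0 ≤ α)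
    (hβ : 0 ≤ β) (ht : 0 < t) :
    β * Real.rpowIntegrand₀₁ p t (α / β) = t ^ (p - 2) * parallelSum α (t * β) := by
  rcases hβ.eq_or_lt with rfl | hβ
  · simp [parallelSum]
  · have h_exp : t ^ (p - 1) = t ^ (p - 2) * t := by
      rw [← Real.rpow_add_one ht.ne']
      ring_nf
    rw [Real.rpowIntegrand₀₁_eq_pow_div hp ht.le (by positivity), parallelSum, h_exp]
    field_simp
    ring

lemma integrableOn_rpow_mul_parallelSum {p α β : ℝ} (hp : p ∈ Ioo 0 1) (hα : 0 ≤ α) (hβ : 0 ≤ β) :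
    IntegrableOn (fun t : ℝ ↦ t ^ (p - 2) * parallelSum α (t * β)) (Ioi 0) :=
  IntegrableOn.congr_fun
    ((Real.integrableOn_rpowIntegrand₀₁_Ioi hp (div_nonneg hα hβ)).const_mul β)
    (fun _ ht ↦ mul_rpowIntegrand₀₁_div_eq_parallelSum hp hα hβ ht) measurableSet_Ioi

lemma integral_rpow_mul_parallelSum {p α β : ℝ} (hp : p ∈ Ioo 0 1) (hα : 0 ≤ α) (hβ : 0 ≤ β) :
    ∫ t in Ioi 0, t ^ (p - 2) * parallelSum α (t * β) =
      α ^ p * β ^ (1 - p) * ∫ t in Ioi 0, Real.rpowIntegrand₀₁ p t 1 := by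
  rw [← setIntegral_congr_fun measurableSet_Ioi
      fun t ht ↦ mul_rpowIntegrand₀₁_div_eq_parallelSum hp hα hβ ht, integral_const_mul,
    Real.integral_rpowIntegrand₀₁_eq_rpow_mul_const hp (div_nonneg hα hβ)]
  rcases hβ.eq_or_lt with rfl | hβ
  · simp [Real.zero_rpow (sub_pos.2 hp.2).ne']
  · rw [Real.div_rpow hα hβ.le, Real.rpow_sub hβ, Real.rpow_one]
    ring

lemma integrableOn_sum_rpow_mul_parallelSum {p : ℝ} (hp : p ∈ Ioo 0 1) {a b : ι → ℝ} (ha : 0 ≤ a)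
    (hb : 0 ≤ b) (c : ι → ℝ) :
    IntegrableOn (fun t : ℝ ↦ ∑ i, t ^ (p - 2) * parallelSum (a i) (t * b i) * c i) (Ioi 0) :=
  integrable_finsetSum _ fun i _ ↦
    (integrableOn_rpow_mul_parallelSum hp (ha i) (hb i)).mul_const (c i)

lemma integral_sum_rpow_mul_parallelSum {p : ℝ} (hp : p ∈ Ioo 0 1) {a b : ι → ℝ} (ha : 0 ≤ a)
    (hb : 0 ≤ b) (c : ι → ℝ) :
    ∫ t in Ioi 0, ∑ i, t ^ (p - 2) * parallelSum (a i) (t * b i) * c i =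
      (∑ i, a i ^ p * b i ^ (1 - p) * c i) * ∫ t in Ioi 0, Real.rpowIntegrand₀₁ p t 1 := by
  rw [integral_finsetSum _ fun i _ ↦
    (integrableOn_rpow_mul_parallelSum hp (ha i) (hb i)).mul_const (c i), Finset.sum_mul]
  refine Finset.sum_congr rfl fun i _ ↦ ?_
  rw [integral_mul_const, integral_rpow_mul_parallelSum hp (ha i) (hb i), mul_right_comm]

-- Stein-Weiss interpolation with change of weights, for `ℓ²`. For `0 < p < 1` the weight
-- `a ^ p * b ^ (1 - p)` is a positive superposition of the parallel sums of `a` and `t * b`.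
theorem sum_rpow_mul_rpow_mul_norm_map_sq_le {p : ℝ} (hp0 : 0 ≤ p) (hp1 : p ≤ 1) {a b : ι → ℝ}
    {a' b' : κ → ℝ} (ha : 0 ≤ a) (hb : 0 ≤ b) (ha' : 0 ≤ a') (hb' : 0 ≤ b')
    (T : (κ → E) →+ (ι → F))
    (hTa : ∀ x, ∑ i, a i * ‖T x i‖ ^ 2 ≤ ∑ k, a' k * ‖x k‖ ^ 2)
    (hTb : ∀ x, ∑ i, b i * ‖T x i‖ ^ 2 ≤ ∑ k, b' k * ‖x k‖ ^ 2) (x : κ → E) :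
    ∑ i, a i ^ p * b i ^ (1 - p) * ‖T x i‖ ^ 2 ≤
      ∑ k, a' k ^ p * b' k ^ (1 - p) * ‖x k‖ ^ 2 := by
  rcases hp0.eq_or_lt with rfl | hp0
  · simpa using hTb x
  rcases hp1.eq_or_lt with rfl | hp1
  · simpa using hTa x
  have hp : p ∈ Ioo (0 : ℝ) 1 := ⟨hp0, hp1⟩
  refine le_of_mul_le_mul_right ?_ (Real.integral_rpowIntegrand₀₁_one_pos hp)
  rw [← integral_sum_rpow_mul_parallelSum hp ha hb, ← integral_sum_rpow_mul_parallelSum hp ha' hb']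
  refine setIntegral_mono_on (integrableOn_sum_rpow_mul_parallelSum hp ha hb _)
    (integrableOn_sum_rpow_mul_parallelSum hp ha' hb' _) measurableSet_Ioi fun t (ht : 0 < t) ↦ ?_
  have h_tb : ∀ x, ∑ i, t * b i * ‖T x i‖ ^ 2 ≤ ∑ k, t * b' k * ‖x k‖ ^ 2 := fun x ↦ by
    simpa only [mul_assoc, ← Finset.mul_sum] using mul_le_mul_of_nonneg_left (hTb x) ht.le
  have h_parallelSum := sum_parallelSum_mul_norm_map_sq_le ha (fun i ↦ mul_nonneg ht.le (hb i)) ha'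
    (fun k ↦ mul_nonneg ht.le (hb' k)) T hTa h_tb x
  simpa only [mul_assoc, ← Finset.mul_sum] using
    mul_le_mul_of_nonneg_left h_parallelSum (Real.rpow_nonneg ht.le (p - 2))

end WeightedInterpolation

section MatrixInequalities

open scoped MatrixOrder

section SpectralCoordinates

variable {𝕜 ι κ : Type*} [RCLike 𝕜] [Fintype ι] [Fintype κ] [DecidableEq ι] [DecidableEq κ]
  {A : Matrix ι ι 𝕜} {Z : Matrix κ κ 𝕜}

/-- The coordinates `uᵢᴴ X wⱼ` of a matrix `X`, where `uᵢ` and `wⱼ` run over the orthonormal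
eigenbases of `A` and `Z` chosen by Mathlib. In these coordinates the commuting operators
`X ↦ f(A) X` and `X ↦ X g(Z)` act diagonally. -/
noncomputable def eigenCoords (hA : A.IsHermitian) (hZ : Z.IsHermitian) :
    Matrix ι κ 𝕜 ≃+ (ι × κ → 𝕜) where
  toFun X ij := (hA.eigenvectorUnitary.1ᴴ * X * hZ.eigenvectorUnitary.1) ij.1 ij.2
  invFun c := hA.eigenvectorUnitary.1 * of c.curry * hZ.eigenvectorUnitary.1ᴴ
  left_inv X := by
    change hA.eigenvectorUnitary.1 * (hA.eigenvectorUnitary.1ᴴ * X * hZ.eigenvectorUnitary.1) *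
      hZ.eigenvectorUnitary.1ᴴ = X
    simp only [← star_eq_conjTranspose, ← Matrix.mul_assoc,
      Unitary.mul_star_self_of_mem hA.eigenvectorUnitary.2, Matrix.one_mul]
    rw [Matrix.mul_assoc, Unitary.mul_star_self_of_mem hZ.eigenvectorUnitary.2, Matrix.mul_one]
  right_inv c := by
    simp only [← star_eq_conjTranspose, ← Matrix.mul_assoc, Unitary.coe_star_mul_self,
      Matrix.one_mul]
    rw [Matrix.mul_assoc, Unitary.coe_star_mul_self, Matrix.mul_one]
    rfl
  map_add' X Y := by
    ext ij
    simp only [Matrix.mul_add, Matrix.add_mul, Matrix.add_apply, Pi.add_apply]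

lemma re_trace_conjTranspose_mul_diagonal_mul_mul_diagonal (d : ι → ℝ) (e : κ → ℝ)
    (C : Matrix ι κ 𝕜) :
    RCLike.re (Cᴴ * diagonal (fun i ↦ (d i : 𝕜)) * C * diagonal (fun j ↦ (e j : 𝕜))).trace =
      ∑ ij : ι × κ, d ij.1 * e ij.2 * ‖C ij.1 ij.2‖ ^ 2 := by
  have h_entry (i : ι) (j : κ) :
      RCLike.re (star (C i j) * (d i : 𝕜) * C i j * (e j : 𝕜)) = d i * e j * ‖C i j‖ ^ 2 := by
    rw [mul_right_comm (star (C i j)), RCLike.star_def, RCLike.conj_mul]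
    norm_cast
    ring
  simp only [trace, diag_apply, mul_diagonal, mul_apply (N := C), conjTranspose_apply,
    Finset.sum_mul, map_sum, h_entry, Fintype.sum_prod_type_right]

lemma re_trace_conjTranspose_mul_cfc_mul_mul_cfc (hA : A.IsHermitian) (hZ : Z.IsHermitian)
    (f g : ℝ → ℝ) (X : Matrix ι κ 𝕜) :
    RCLike.re (Xᴴ * cfc f A * X * cfc g Z).trace =
      ∑ ij : ι × κ, f (hA.eigenvalues ij.1) * g (hZ.eigenvalues ij.2) *
        ‖eigenCoords hA hZ X ij‖ ^ 2 := by
  have h_trace := re_trace_conjTranspose_mul_diagonal_mul_mul_diagonal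
    (fun i ↦ f (hA.eigenvalues i)) (fun j ↦ g (hZ.eigenvalues j))
    (hA.eigenvectorUnitary.1ᴴ * X * hZ.eigenvectorUnitary.1)
  simp only [conjTranspose_mul, conjTranspose_conjTranspose, Matrix.mul_assoc] at h_trace
  rw [hA.cfc_eq, hZ.cfc_eq, IsHermitian.cfc, IsHermitian.cfc, Unitary.conjStarAlgAut_apply,
    Unitary.conjStarAlgAut_apply, star_eq_conjTranspose, star_eq_conjTranspose,
    ← Matrix.mul_assoc (Xᴴ * _ * X), trace_mul_comm]
  simp only [Matrix.mul_assoc]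
  refine h_trace.trans ?_
  simp only [eigenCoords, Matrix.mul_assoc]
  rfl

lemma re_trace_conjTranspose_mul_mul (hA : A.IsHermitian) (hZ : Z.IsHermitian)
    (X : Matrix ι κ 𝕜) :
    RCLike.re (Xᴴ * A * X).trace =
      ∑ ij : ι × κ, hA.eigenvalues ij.1 * ‖eigenCoords hA hZ X ij‖ ^ 2 := by
  simpa [cfc_id' ℝ A, cfc_const_one ℝ Z] using
    re_trace_conjTranspose_mul_cfc_mul_mul_cfc hA hZ (fun x ↦ x) (fun _ ↦ 1) X

lemma re_trace_conjTranspose_mul_self_mul (hA : A.IsHermitian) (hZ : Z.IsHermitian)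
    (X : Matrix ι κ 𝕜) :
    RCLike.re (Xᴴ * X * Z).trace =
      ∑ ij : ι × κ, hZ.eigenvalues ij.2 * ‖eigenCoords hA hZ X ij‖ ^ 2 := by
  simpa [cfc_const_one ℝ A, cfc_id' ℝ Z] using
    re_trace_conjTranspose_mul_cfc_mul_mul_cfc hA hZ (fun _ ↦ 1) (fun x ↦ x) X

lemma re_trace_conjTranspose_mul_rpow_mul_mul_rpow (hA : A.PosSemidef) (hZ : Z.PosSemidef)
    (r s : ℝ) (X : Matrix ι κ 𝕜) :
    RCLike.re (Xᴴ * A ^ r * X * Z ^ s).trace =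
      ∑ ij : ι × κ, hA.1.eigenvalues ij.1 ^ r * hZ.1.eigenvalues ij.2 ^ s *
        ‖eigenCoords hA.1 hZ.1 X ij‖ ^ 2 := by
  rw [CFC.rpow_eq_cfc_real, CFC.rpow_eq_cfc_real,
    re_trace_conjTranspose_mul_cfc_mul_mul_cfc hA.1 hZ.1]

theorem re_trace_conjTranspose_mul_rpow_mul_mul_rpow_le {ι' κ' : Type*} [Fintype ι'] [Fintype κ']
    [DecidableEq ι'] [DecidableEq κ'] {A' : Matrix ι' ι' 𝕜} {Z' : Matrix κ' κ' 𝕜} {p : ℝ}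
    (hp0 : 0 ≤ p) (hp1 : p ≤ 1) (hA : A.PosSemidef) (hZ : Z.PosSemidef) (hA' : A'.PosSemidef)
    (hZ' : Z'.PosSemidef) (Φ : Matrix ι' κ' 𝕜 →+ Matrix ι κ 𝕜)
    (hΦA : ∀ X, RCLike.re ((Φ X)ᴴ * A * Φ X).trace ≤ RCLike.re (Xᴴ * A' * X).trace)
    (hΦZ : ∀ X, RCLike.re ((Φ X)ᴴ * Φ X * Z).trace ≤ RCLike.re (Xᴴ * X * Z').trace)
    (X : Matrix ι' κ' 𝕜) :
    RCLike.re ((Φ X)ᴴ * A ^ p * Φ X * Z ^ (1 - p)).trace ≤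
      RCLike.re (Xᴴ * A' ^ p * X * Z' ^ (1 - p)).trace := by
  let e := eigenCoords hA.1 hZ.1
  let e' := eigenCoords hA'.1 hZ'.1
  let T : (ι' × κ' → 𝕜) →+ (ι × κ → 𝕜) := e.toAddMonoidHom.comp (Φ.comp e'.symm.toAddMonoidHom)
  have hT (X : Matrix ι' κ' 𝕜) : T (e' X) = e (Φ X) := by simp [T]
  have h_left : ∀ x, ∑ ij, hA.1.eigenvalues ij.1 * ‖T x ij‖ ^ 2 ≤
      ∑ ij, hA'.1.eigenvalues ij.1 * ‖x ij‖ ^ 2 := e'.surjective.forall.2 fun X ↦ by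
    simpa only [hT, re_trace_conjTranspose_mul_mul hA.1 hZ.1,
      re_trace_conjTranspose_mul_mul hA'.1 hZ'.1] using hΦA X
  have h_right : ∀ x, ∑ ij, hZ.1.eigenvalues ij.2 * ‖T x ij‖ ^ 2 ≤
      ∑ ij, hZ'.1.eigenvalues ij.2 * ‖x ij‖ ^ 2 := e'.surjective.forall.2 fun X ↦ by
    simpa only [hT, re_trace_conjTranspose_mul_self_mul hA.1 hZ.1,
      re_trace_conjTranspose_mul_self_mul hA'.1 hZ'.1] using hΦZ X
  rw [re_trace_conjTranspose_mul_rpow_mul_mul_rpow hA hZ,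
    re_trace_conjTranspose_mul_rpow_mul_mul_rpow hA' hZ', ← hT]
  have h_interpolation := sum_rpow_mul_rpow_mul_norm_map_sq_le hp0 hp1
    (fun ij ↦ hA.eigenvalues_nonneg ij.1) (fun ij ↦ hZ.eigenvalues_nonneg ij.2)
    (fun ij ↦ hA'.eigenvalues_nonneg ij.1) (fun ij ↦ hZ'.eigenvalues_nonneg ij.2) T h_left h_right
  exact h_interpolation (e' X)

lemma re_trace_cfc (hA : A.IsHermitian) (f : ℝ → ℝ) :
    RCLike.re (cfc f A).trace = ∑ i, f (hA.eigenvalues i) := by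
  rw [hA.cfc_eq, IsHermitian.cfc, Unitary.conjStarAlgAut_apply, trace_mul_comm,
    ← Matrix.mul_assoc, Unitary.coe_star_mul_self, Matrix.one_mul, trace_diagonal, map_sum]
  simp only [Function.comp_apply, RCLike.ofReal_re]

lemma re_trace_cfc_mul_cfc (hA : A.IsHermitian) {Y : Matrix ι ι 𝕜} (hY : Y.IsHermitian)
    (f g : ℝ → ℝ) : RCLike.re (cfc f A * cfc g Y).trace =
      ∑ ij : ι × ι, f (hA.eigenvalues ij.1) * g (hY.eigenvalues ij.2) *
        ‖eigenCoords hA hY 1 ij‖ ^ 2 := by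
  simpa using re_trace_conjTranspose_mul_cfc_mul_mul_cfc hA hY f g 1

lemma rpow_le_mul_mul_rpow_add_mul {q y z : ℝ} (hq0 : 0 < q) (hq1 : q ≤ 1) (hy : 0 ≤ y)
    (hz : 0 < z) : y ^ q ≤ q * (y * z ^ (1 - 1 / q)) + (1 - q) * z :=
  calc y ^ q = (y * z ^ (1 - 1 / q)) ^ q * z ^ (1 - q) := by
        rw [Real.mul_rpow hy (by positivity), ← Real.rpow_mul hz.le, mul_assoc, ← Real.rpow_add hz,
          show (1 - 1 / q) * q + (1 - q) = 0 by field_simp; ring, Real.rpow_zero, mul_one]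
    _ ≤ q * (y * z ^ (1 - 1 / q)) + (1 - q) * z :=
        Real.geom_mean_le_arith_mean2_weighted hq0.le (sub_nonneg.2 hq1)
          (mul_nonneg hy (Real.rpow_nonneg hz.le _)) hz.le (add_sub_cancel q 1)

lemma re_trace_rpow_le {Y : Matrix ι ι 𝕜} (hY : Y.PosSemidef) {Z : Matrix ι ι 𝕜}
    (hZ : Z.PosDef) {q : ℝ} (hq0 : 0 < q) (hq1 : q ≤ 1) :
    RCLike.re (Y ^ q).trace ≤
      q * RCLike.re (Y * Z ^ (1 - 1 / q)).trace + (1 - q) * RCLike.re Z.trace := by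
  have hY_herm := hY.isHermitian
  have hZ_herm := hZ.isHermitian
  have hZ_nonneg := hZ.posSemidef.nonneg
  have h_left := re_trace_cfc_mul_cfc hY_herm hZ_herm (· ^ q) (fun _ ↦ 1)
  have h_mid := re_trace_cfc_mul_cfc hY_herm hZ_herm (fun y ↦ y) (· ^ (1 - 1 / q))
  have h_right := re_trace_cfc_mul_cfc hY_herm hZ_herm (fun _ ↦ 1) (fun z ↦ z)
  rw [← CFC.rpow_eq_cfc_real, cfc_const_one ℝ Z, Matrix.mul_one] at h_left
  rw [cfc_id' ℝ Y, ← CFC.rpow_eq_cfc_real] at h_mid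
  rw [cfc_const_one ℝ Y, cfc_id' ℝ Z, Matrix.one_mul] at h_right
  rw [h_left, h_mid, h_right, Finset.mul_sum, Finset.mul_sum, ← Finset.sum_add_distrib]
  refine Finset.sum_le_sum fun ij _ ↦ ?_
  have h_scalar := mul_le_mul_of_nonneg_right
    (rpow_le_mul_mul_rpow_add_mul hq0 hq1 (hY.eigenvalues_nonneg ij.1) (hZ.eigenvalues_pos ij.2))
    (sq_nonneg ‖eigenCoords hY_herm hZ_herm 1 ij‖)
  linarith

lemma mul_rpow_add_le_rpow {q y ε : ℝ} (hq0 : 0 < q) (hq1 : q ≤ 1) (hy : 0 ≤ y) (hε : 0 < ε) :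
    y * (y ^ q + ε) ^ (1 - 1 / q) ≤ y ^ q := by
  rcases hy.eq_or_lt with rfl | hy
  · simp [Real.zero_rpow hq0.ne']
  · have h_exp : 1 - 1 / q ≤ 0 := sub_nonpos.2 ((one_le_div hq0).2 hq1)
    calc y * (y ^ q + ε) ^ (1 - 1 / q)
        ≤ y * (y ^ q) ^ (1 - 1 / q) := by
          gcongr ?_ * ?_
          exact Real.rpow_le_rpow_of_nonpos (by positivity) (by linarith) h_exp
      _ = y ^ q := by
          rw [← Real.rpow_mul hy.le, mul_comm y, ← Real.rpow_add_one hy.ne']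
          congr 1
          field_simp
          ring

lemma re_trace_mul_rpow_add_smul_one_le {Y : Matrix ι ι 𝕜} (hY : Y.PosSemidef) {q : ℝ} (hq0 : 0 < q)
    (hq1 : q ≤ 1) {ε : ℝ} (hε : 0 < ε) :
    RCLike.re (Y * (Y ^ q + ε • 1) ^ (1 - 1 / q)).trace ≤ RCLike.re (Y ^ q).trace := by
  have hY_herm := hY.isHermitian
  have h_cont (f : ℝ → ℝ) : ContinuousOn f (spectrum ℝ Y) := Y.finite_real_spectrum.continuousOn f
  have h_nonneg : 0 ≤ Y ^ q + ε • 1 :=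
    add_nonneg CFC.rpow_nonneg (PosSemidef.one.smul hε.le).nonneg
  have h_cfc : Y ^ q + ε • 1 = cfc (fun y : ℝ ↦ y ^ q + ε) Y := by
    rw [cfc_add_const ε _ Y (h_cont _), CFC.rpow_eq_cfc_real, Algebra.algebraMap_eq_smul_one]
  have h_mul : Y * (Y ^ q + ε • 1) ^ (1 - 1 / q) =
      cfc (fun y : ℝ ↦ y * (y ^ q + ε) ^ (1 - 1 / q)) Y := by
    rw [CFC.rpow_eq_cfc_real, h_cfc,
      ← cfc_comp' (hg := (finite_real_spectrum.image _).continuousOn _) (hf := h_cont _)]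
    nth_rewrite 1 [← cfc_id' ℝ Y]
    rw [← cfc_mul _ _ Y (h_cont _) (h_cont _)]
  rw [h_mul, CFC.rpow_eq_cfc_real, re_trace_cfc hY_herm, re_trace_cfc hY_herm]
  exact Finset.sum_le_sum fun i _ ↦
    mul_rpow_add_le_rpow hq0 hq1 (hY.eigenvalues_nonneg i) hε

end SpectralCoordinates

section TraceForms

variable {𝕜 ι κ : Type*} [RCLike 𝕜] [Fintype ι] [Fintype κ]

lemma trace_mul_nonneg {A Z : Matrix ι ι 𝕜} (hA : A.PosSemidef) (hZ : Z.PosSemidef) :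
    0 ≤ (A * Z).trace := by
  classical
  obtain ⟨K, rfl⟩ := CStarAlgebra.nonneg_iff_eq_star_mul_self.1 hZ.nonneg
  rw [star_eq_conjTranspose, ← Matrix.mul_assoc, trace_mul_comm, ← Matrix.mul_assoc]
  exact (hA.mul_mul_conjTranspose_same K).trace_nonneg

lemma re_trace_mul_nonneg {A Z : Matrix ι ι 𝕜} (hA : A.PosSemidef) (hZ : Z.PosSemidef) :
    0 ≤ RCLike.re (A * Z).trace :=
  (RCLike.nonneg_iff.1 (trace_mul_nonneg hA hZ)).1

lemma posSemidef_of_forall_trace_mul_nonneg {M : Matrix ι ι ℂ}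
    (hM : ∀ P : Matrix ι ι ℂ, P.PosSemidef → 0 ≤ (M * P).trace) : M.PosSemidef := by
  classical
  rw [← isPositive_toEuclideanLin_iff, LinearMap.isPositive_iff_complex]
  intro x
  have h_inner :
      inner ℂ (toEuclideanLin M x) x = star (M * vecMulVec x.ofLp (star x.ofLp)).trace := by
    rw [mul_vecMulVec, trace_vecMulVec, EuclideanSpace.inner_eq_star_dotProduct,
      ofLp_toLpLin, toLin'_apply, ← star_dotProduct_star, star_star]
  have h_nonneg : 0 ≤ inner ℂ (toEuclideanLin M x) x :=
    h_inner ▸ star_nonneg_iff.2 (hM _ (posSemidef_vecMulVec_self_star x.ofLp))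
  exact ⟨Complex.ext rfl (RCLike.nonneg_iff.1 h_nonneg).2.symm, (RCLike.nonneg_iff.1 h_nonneg).1⟩

lemma two_mul_re_trace_conjTranspose_mul_le [DecidableEq ι] [DecidableEq κ] {G : Matrix ι ι 𝕜}
    {H : Matrix κ κ 𝕜} (hG : G.PosDef) (hH : H.PosDef) (B M : Matrix ι κ 𝕜) :
    2 * RCLike.re (Bᴴ * M).trace ≤
      RCLike.re (Bᴴ * G⁻¹ * B * H⁻¹).trace + RCLike.re (Mᴴ * G * M * H).trace := by
  have hG' := (isUnit_iff_isUnit_det G).1 hG.isUnit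
  have hH' := (isUnit_iff_isUnit_det H).1 hH.isUnit
  set E := B - G * M * H with hE
  have h_nonneg : 0 ≤ RCLike.re (Eᴴ * G⁻¹ * E * H⁻¹).trace :=
    re_trace_mul_nonneg (hG.inv.posSemidef.conjTranspose_mul_mul_same E) hH.inv.posSemidef
  have h_expand : Eᴴ * G⁻¹ * E * H⁻¹ =
      Bᴴ * G⁻¹ * B * H⁻¹ - Bᴴ * M - H * (Mᴴ * B * H⁻¹) + H * (Mᴴ * G * M) := by
    simp only [hE, conjTranspose_sub, conjTranspose_mul, hG.1.eq, hH.1.eq, Matrix.sub_mul,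
      Matrix.mul_sub, Matrix.mul_assoc, mul_nonsing_inv_cancel_left _ _ hG',
      nonsing_inv_mul_cancel_left _ _ hG', mul_nonsing_inv _ hH', Matrix.mul_one]
    abel
  have h_comm : RCLike.re (Mᴴ * B).trace = RCLike.re (Bᴴ * M).trace := by
    rw [← RCLike.conj_re, ← RCLike.star_def, ← trace_conjTranspose, conjTranspose_mul,
      conjTranspose_conjTranspose]
  rw [h_expand, trace_add, trace_sub, trace_sub, trace_mul_comm H, trace_mul_comm H,
    nonsing_inv_mul_cancel_right _ _ hH', map_add, map_sub, map_sub, h_comm] at h_nonneg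
  linarith

lemma re_trace_conjTranspose_mul_mul_mul_le_of_dual {ι' κ' : Type*} [Fintype ι'] [Fintype κ']
    [DecidableEq ι] [DecidableEq κ] {Φ : Matrix ι' κ' 𝕜 → Matrix ι κ 𝕜}
    {Ψ : Matrix ι κ 𝕜 → Matrix ι' κ' 𝕜}
    (hΦΨ : ∀ B X, (Bᴴ * Φ X).trace = ((Ψ B)ᴴ * X).trace) {G : Matrix ι ι 𝕜} {H : Matrix κ κ 𝕜}
    (hG : G.PosDef) (hH : H.PosDef) {G' K' : Matrix ι' ι' 𝕜} {H' L' : Matrix κ' κ' 𝕜}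
    (hK' : K'.IsHermitian) (hL' : L'.IsHermitian) (hKGK : K' * G' * K' = K')
    (hLHL : L' * H' * L' = L')
    (hΦ : ∀ X, RCLike.re ((Φ X)ᴴ * G * Φ X * H).trace ≤ RCLike.re (Xᴴ * G' * X * H').trace)
    (B : Matrix ι κ 𝕜) :
    RCLike.re ((Ψ B)ᴴ * K' * Ψ B * L').trace ≤ RCLike.re (Bᴴ * G⁻¹ * B * H⁻¹).trace := by
  -- The critical point of `X ↦ 2 re tr ((Ψ B)ᴴ X) - re tr (Xᴴ G' X H')`.
  set X := K' * Ψ B * L' with hX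
  have h_linear : (Bᴴ * Φ X).trace = ((Ψ B)ᴴ * K' * Ψ B * L').trace := by
    rw [hΦΨ, hX]
    simp only [Matrix.mul_assoc]
  have h_quadratic : (Xᴴ * G' * X * H').trace = ((Ψ B)ᴴ * K' * Ψ B * L').trace :=
    calc (Xᴴ * G' * X * H').trace
        = (L' * ((Ψ B)ᴴ * (K' * G' * K') * Ψ B * (L' * H'))).trace := by
          simp only [hX, conjTranspose_mul, hK'.eq, hL'.eq, Matrix.mul_assoc]
      _ = ((Ψ B)ᴴ * (K' * G' * K') * Ψ B * (L' * H' * L')).trace := by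
          rw [trace_mul_comm, Matrix.mul_assoc _ (L' * H')]
      _ = ((Ψ B)ᴴ * K' * Ψ B * L').trace := by rw [hKGK, hLHL]
  have h_amgm := two_mul_re_trace_conjTranspose_mul_le hG hH B (Φ X)
  have h_contr := hΦ X
  rw [h_linear] at h_amgm
  rw [h_quadratic] at h_contr
  linarith

end TraceForms

section MatrixPowers

variable {𝕜 ι : Type*} [RCLike 𝕜] [Fintype ι] [DecidableEq ι] {A : Matrix ι ι 𝕜}

lemma mpow_eq_rpow {k : ℕ} {A : Matrix (Fin k) (Fin k) ℂ} (hA : A.PosSemidef) (p : ℝ) :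
    mpow A p = A ^ p := by
  have hA' := hA.isHermitian
  rw [CFC.rpow_eq_cfc_real, hA'.cfc_eq, IsHermitian.cfc, Unitary.conjStarAlgAut_apply, mpow,
    dif_pos hA']
  rfl

lemma rpow_neg_mul_rpow_mul_rpow_neg (hA : A.PosSemidef) (p : ℝ) :
    A ^ (-p) * A ^ p * A ^ (-p) = A ^ (-p) := by
  have h_cont (f : ℝ → ℝ) : ContinuousOn f (spectrum ℝ A) := A.finite_real_spectrum.continuousOn f
  simp only [CFC.rpow_eq_cfc_real (a := A)]
  rw [← cfc_mul _ _ A (h_cont _) (h_cont _), ← cfc_mul _ _ A (h_cont _) (h_cont _)]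
  refine cfc_congr fun x hx ↦ ?_
  have hx0 : 0 ≤ x := spectrum_nonneg_of_nonneg hA.nonneg hx
  rcases hx0.eq_or_lt with rfl | hx0
  · rcases eq_or_ne p 0 with rfl | hp
    · simp
    · simp [Real.zero_rpow (neg_ne_zero.2 hp)]
  · simp [← Real.rpow_add hx0]

lemma inv_rpow_eq_rpow_neg (hA : A.PosDef) (p : ℝ) : (A ^ p)⁻¹ = A ^ (-p) :=
  inv_eq_right_inv (CFC.rpow_mul_rpow_neg p hA.isStrictlyPositive)

lemma posSemidef_rpow (A : Matrix ι ι 𝕜) (p : ℝ) : (A ^ p).PosSemidef :=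
  CFC.rpow_nonneg.posSemidef

lemma posDef_rpow (hA : A.PosDef) (p : ℝ) : (A ^ p).PosDef :=
  (IsStrictlyPositive.rpow A p hA.isStrictlyPositive).posDef

end MatrixPowers

section SchwarzMaps

variable {m n : ℕ} {Φ : Matrix (Fin m) (Fin m) ℂ →ₗ[ℂ] Matrix (Fin n) (Fin n) ℂ}
  {Ψ : Matrix (Fin n) (Fin n) ℂ →ₗ[ℂ] Matrix (Fin m) (Fin m) ℂ}

lemma IsPositiveMap.map_conjTranspose (hΦ : IsPositiveMap Φ) (X : Matrix (Fin m) (Fin m) ℂ) :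
    Φ Xᴴ = (Φ X)ᴴ :=
  map_star (PositiveLinearMap.mk₀ Φ fun X hX ↦ (hΦ X hX.posSemidef).nonneg) X

lemma IsSchwarz.isPositiveMap (hΦ : IsSchwarz Φ) : IsPositiveMap Φ := fun X hX ↦ by
  obtain ⟨K, rfl⟩ := CStarAlgebra.nonneg_iff_eq_star_mul_self.1 hX.nonneg
  exact sub_add_cancel (Φ (Kᴴ * K)) _ ▸ (hΦ K).add (posSemidef_conjTranspose_mul_self (Φ K))

lemma IsSchwarz.posSemidef_one_sub_map_one (hΦ : IsSchwarz Φ) : (1 - Φ 1).PosSemidef := by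
  have h_herm : (Φ 1)ᴴ = Φ 1 := (hΦ.isPositiveMap 1 .one).isHermitian
  have h_schwarz := hΦ 1
  rw [conjTranspose_one, Matrix.one_mul, h_herm] at h_schwarz
  convert (posSemidef_conjTranspose_mul_self (1 - Φ 1)).add h_schwarz using 1
  rw [conjTranspose_sub, conjTranspose_one, h_herm]
  noncomm_ring

lemma IsHSAdjoint.isPositiveMap (hadj : IsHSAdjoint Φ Ψ) (hΦ : IsPositiveMap Φ) :
    IsPositiveMap Ψ := fun A hA ↦ by
  rw [← conjTranspose_conjTranspose (Ψ A)]
  refine (posSemidef_of_forall_trace_mul_nonneg fun P hP ↦ ?_).conjTranspose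
  rw [← hadj]
  exact trace_mul_nonneg hA.conjTranspose (hΦ P hP)

lemma IsHSAdjoint.trace_mul_map (hadj : IsHSAdjoint Φ Ψ) (hΦ : IsPositiveMap Φ)
    {A : Matrix (Fin n) (Fin n) ℂ} (hA : A.PosSemidef) (X : Matrix (Fin m) (Fin m) ℂ) :
    (A * Φ X).trace = (Ψ A * X).trace := by
  rw [← hA.isHermitian.eq, hadj, hA.isHermitian.eq, (hadj.isPositiveMap hΦ A hA).isHermitian.eq]

lemma IsSchwarz.re_trace_map_le (hΦ : IsSchwarz Φ) (hadj : IsHSAdjoint Φ Ψ)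
    {Z : Matrix (Fin n) (Fin n) ℂ} (hZ : Z.PosSemidef) : (Ψ Z).trace.re ≤ Z.trace.re := by
  have h := re_trace_mul_nonneg hZ hΦ.posSemidef_one_sub_map_one
  rw [Matrix.mul_sub, trace_sub, hadj.trace_mul_map hΦ.isPositiveMap hZ, Matrix.mul_one,
    Matrix.mul_one, map_sub] at h
  exact sub_nonneg.1 h

lemma IsSchwarz.re_trace_conjTranspose_map_mul_map_mul_le (hΦ : IsSchwarz Φ)
    (hadj : IsHSAdjoint Φ Ψ) {Z : Matrix (Fin n) (Fin n) ℂ} (hZ : Z.PosSemidef)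
    (X : Matrix (Fin m) (Fin m) ℂ) :
    ((Φ X)ᴴ * Φ X * Z).trace.re ≤ (Xᴴ * X * Ψ Z).trace.re := by
  have h := re_trace_mul_nonneg hZ (hΦ X)
  rw [Matrix.mul_sub, trace_sub, hadj.trace_mul_map hΦ.isPositiveMap hZ, trace_mul_comm,
    trace_mul_comm Z, map_sub] at h
  exact sub_nonneg.1 h

lemma IsSchwarz.re_trace_conjTranspose_map_mul_mul_map_le (hΦ : IsSchwarz Φ)
    (hadj : IsHSAdjoint Φ Ψ) {A : Matrix (Fin n) (Fin n) ℂ} (hA : A.PosSemidef)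
    (X : Matrix (Fin m) (Fin m) ℂ) :
    ((Φ X)ᴴ * A * Φ X).trace.re ≤ (Xᴴ * Ψ A * X).trace.re := by
  have h := hΦ.re_trace_conjTranspose_map_mul_map_mul_le hadj hA Xᴴ
  rwa [hΦ.isPositiveMap.map_conjTranspose, conjTranspose_conjTranspose,
    conjTranspose_conjTranspose, ← trace_mul_cycle, ← trace_mul_cycle Xᴴ] at h

theorem IsSchwarz.re_trace_map_mul_rpow_neg_mul_rpow_neg_le {p : ℝ} (hp0 : 0 ≤ p) (hp1 : p ≤ 1)
    (hΦ : IsSchwarz Φ) (hadj : IsHSAdjoint Φ Ψ) {A Z : Matrix (Fin n) (Fin n) ℂ} (hA : A.PosDef)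
    (hZ : Z.PosDef) {Z' : Matrix (Fin m) (Fin m) ℂ} (hZ' : Z'.PosDef) (hΨZ : Ψ Z ≤ Z')
    (B : Matrix (Fin n) (Fin n) ℂ) :
    ((Ψ B)ᴴ * Ψ A ^ (-p) * Ψ B * Z' ^ (-(1 - p))).trace.re ≤
      (Bᴴ * A ^ (-p) * B * Z ^ (-(1 - p))).trace.re := by
  have hΨA : (Ψ A).PosSemidef := hadj.isPositiveMap hΦ.isPositiveMap A hA.posSemidef
  have h_left := hΦ.re_trace_conjTranspose_map_mul_mul_map_le hadj hA.posSemidef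
  have h_right (X : Matrix (Fin m) (Fin m) ℂ) :
      ((Φ X)ᴴ * Φ X * Z).trace.re ≤ (Xᴴ * X * Z').trace.re := by
    have h := re_trace_mul_nonneg (posSemidef_conjTranspose_mul_self X) (le_iff.1 hΨZ)
    rw [Matrix.mul_sub, trace_sub, map_sub] at h
    exact (hΦ.re_trace_conjTranspose_map_mul_map_mul_le hadj hZ.posSemidef X).trans
      (sub_nonneg.1 h)
  rw [← inv_rpow_eq_rpow_neg hA, ← inv_rpow_eq_rpow_neg hZ]
  exact re_trace_conjTranspose_mul_mul_mul_le_of_dual hadj (posDef_rpow hA p)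
    (posDef_rpow hZ (1 - p)) (posSemidef_rpow _ _).isHermitian
    (posDef_rpow hZ' _).isHermitian (rpow_neg_mul_rpow_mul_rpow_neg hΨA p)
    (rpow_neg_mul_rpow_mul_rpow_neg hZ'.posSemidef (1 - p))
    (re_trace_conjTranspose_mul_rpow_mul_mul_rpow_le hp0 hp1 hA.posSemidef hZ.posSemidef hΨA
      hZ'.posSemidef Φ.toAddMonoidHom h_left h_right) B

lemma IsSchwarz.re_trace_rpow_map_le_add {p : ℝ} (hp0 : 0 ≤ p) (hp1 : p ≤ 1)
    (hΦ : IsSchwarz Φ) (hadj : IsHSAdjoint Φ Ψ) {A : Matrix (Fin n) (Fin n) ℂ} (hA : A.PosDef)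
    (B : Matrix (Fin n) (Fin n) ℂ) {ε : ℝ} (hε : 0 < ε) :
    (((Ψ B)ᴴ * Ψ A ^ (-p) * Ψ B) ^ (1 / (2 - p))).trace.re ≤
      ((Bᴴ * A ^ (-p) * B) ^ (1 / (2 - p))).trace.re + ε * (n + m) := by
  set q := 1 / (2 - p) with hq
  set Y := Bᴴ * A ^ (-p) * B
  set Y' := (Ψ B)ᴴ * Ψ A ^ (-p) * Ψ B
  have hq0 : 0 < q := one_div_pos.2 (by linarith)
  have hq1 : q ≤ 1 := (div_le_one (by linarith)).2 (by linarith)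
  have h_exp : -(1 - p) = 1 - 1 / q := by rw [hq, one_div_one_div]; ring
  have hΨ := hadj.isPositiveMap hΦ.isPositiveMap
  have hY : Y.PosSemidef := (posSemidef_rpow _ _).conjTranspose_mul_mul_same B
  have hY' : Y'.PosSemidef := (posSemidef_rpow _ _).conjTranspose_mul_mul_same (Ψ B)
  have h_one {k : ℕ} : (ε • 1 : Matrix (Fin k) (Fin k) ℂ).PosDef := PosDef.one.smul hε
  set Z := Y ^ q + ε • 1
  have hZ : Z.PosDef := h_one.posSemidef_add (posSemidef_rpow Y q)
  have hZ' : (Ψ Z + ε • 1).PosDef := h_one.posSemidef_add (hΨ Z hZ.posSemidef)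
  have h_mono := hΦ.re_trace_map_mul_rpow_neg_mul_rpow_neg_le hp0 hp1 hadj hA hZ hZ'
    (le_add_of_nonneg_right h_one.posSemidef.nonneg) B
  have h_opt := re_trace_mul_rpow_add_smul_one_le hY hq0 hq1 hε
  have h_trace_one {k : ℕ} : (ε • 1 : Matrix (Fin k) (Fin k) ℂ).trace.re = ε * k := by simp
  have h_trace_Z : Z.trace.re = (Y ^ q).trace.re + ε * n := by
    rw [trace_add, Complex.add_re, h_trace_one]
  have h_trace_Z' : (Ψ Z + ε • 1).trace.re ≤ (Y ^ q).trace.re + ε * (n + m) := by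
    rw [trace_add, Complex.add_re, h_trace_one]
    linarith [hΦ.re_trace_map_le hadj hZ.posSemidef]
  rw [h_exp] at h_mono
  calc (Y' ^ q).trace.re
      ≤ q * (Y' * (Ψ Z + ε • 1) ^ (1 - 1 / q)).trace.re + (1 - q) * (Ψ Z + ε • 1).trace.re :=
        re_trace_rpow_le hY' hZ' hq0 hq1
    _ ≤ q * (Y ^ q).trace.re + (1 - q) * ((Y ^ q).trace.re + ε * (n + m)) := by
        gcongr q * ?_ + (1 - q) * ?_
        exact h_mono.trans h_opt
    _ ≤ (Y ^ q).trace.re + ε * (n + m) := by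
        linarith [mul_nonneg hq0.le (by positivity : 0 ≤ ε * ((n : ℝ) + m))]

theorem IsSchwarz.re_trace_rpow_map_le {p : ℝ} (hp0 : 0 ≤ p) (hp1 : p ≤ 1)
    (hΦ : IsSchwarz Φ) (hadj : IsHSAdjoint Φ Ψ) {A : Matrix (Fin n) (Fin n) ℂ} (hA : A.PosDef)
    (B : Matrix (Fin n) (Fin n) ℂ) :
    (((Ψ B)ᴴ * Ψ A ^ (-p) * Ψ B) ^ (1 / (2 - p))).trace.re ≤
      ((Bᴴ * A ^ (-p) * B) ^ (1 / (2 - p))).trace.re := by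
  refine le_of_forall_pos_le_add fun δ hδ ↦ ?_
  have h_card : 0 < (n : ℝ) + m + 1 := by positivity
  refine (hΦ.re_trace_rpow_map_le_add hp0 hp1 hadj hA B (div_pos hδ h_card)).trans ?_
  gcongr
  rw [div_mul_eq_mul_div, div_le_iff₀ h_card]
  linarith

end SchwarzMaps

end MatrixInequalities

theorem stmt13_general {m n : ℕ} (p : ℝ) (hp0 : 0 ≤ p) (hp1 : p ≤ 1)
    (Φ : Matrix (Fin m) (Fin m) ℂ →ₗ[ℂ] Matrix (Fin n) (Fin n) ℂ)
    (Ψ : Matrix (Fin n) (Fin n) ℂ →ₗ[ℂ] Matrix (Fin m) (Fin m) ℂ)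
    (hΦ : IsSchwarz Φ) (hadj : IsHSAdjoint Φ Ψ)
    (A : Matrix (Fin n) (Fin n) ℂ) (hA : A.PosDef) (B : Matrix (Fin n) (Fin n) ℂ) :
    (mpow (Bᴴ * mpow A (-p) * B) (1 / (2 - p))).trace.re ≥
      (mpow ((Ψ B)ᴴ * mpow (Ψ A) (-p) * Ψ B) (1 / (2 - p))).trace.re := by
  have hΨA := hadj.isPositiveMap hΦ.isPositiveMap A hA.posSemidef
  rw [mpow_eq_rpow hA.posSemidef, mpow_eq_rpow hΨA,
    mpow_eq_rpow ((posSemidef_rpow _ _).conjTranspose_mul_mul_same B),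
    mpow_eq_rpow ((posSemidef_rpow _ _).conjTranspose_mul_mul_same (Ψ B))]
  exact hΦ.re_trace_rpow_map_le hp0 hp1 hadj hA B

theorem stmt13 {m n : ℕ} (p : ℝ) (hp0 : 0 < p) (hp1 : p < 1)
    (Φ : Matrix (Fin m) (Fin m) ℂ →ₗ[ℂ] Matrix (Fin n) (Fin n) ℂ)
    (Ψ : Matrix (Fin n) (Fin n) ℂ →ₗ[ℂ] Matrix (Fin m) (Fin m) ℂ)
    (hΦ : IsSchwarz Φ) (hunital : Φ 1 = 1) (hadj : IsHSAdjoint Φ Ψ)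
    (A : Matrix (Fin n) (Fin n) ℂ) (hA : A.PosDef)
    (B : Matrix (Fin n) (Fin n) ℂ) (hB : IsUnit B) :
    (mpow (Bᴴ * mpow A (-p) * B) (1 / (2 - p))).trace.re ≥
      (mpow ((Ψ B)ᴴ * mpow (Ψ A) (-p) * Ψ B) (1 / (2 - p))).trace.re :=
  stmt13_general p hp0.le hp1.le Φ Ψ hΦ hadj A hA B
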